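/- arXiv:2505.14817 — 2 statements merged into one kernel-verified Lean document; each statement's English description precedes it below -/
import Mathlib

section
/- (Boundedness: the DiBS field points outward far from the minimizers) Let ℓ^1,…,ℓ^N : ℝ^n → ℝ be differentiable, with ℓ^i μᵢ-strongly convex (μᵢ > 0) and Lᵢ-smooth, and let x*ⁱ be the global minimizer of ℓ^i. Fix c ∈ ℝ^n and set R = max_{1≤i≤N} ‖x*ⁱ − c‖ and κ = max_{1≤i≤N} Lᵢ/μᵢ. Then for every x ∈ ℝ^n with ‖x − c‖ > (1 + κ)·R and x ≠ c, the DiBS vector field satisfies ⟨h(x), x − c⟩ > 0; consequently the continuous-time DiBS dynamics ẋ = −h(x) cannot leave the closed ball of radius (1 + κ)·R + ε around c once inside it, for any ε > 0. -/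
/-!
Write `gᵢ = ∇ℓⁱ` and `dᵢ = ‖x − x*ⁱ‖`. Strong convexity and smoothness give
`⟪gᵢ x, x − x*ⁱ⟫ ≥ μᵢ dᵢ²` and `‖gᵢ x‖ ≤ Lᵢ dᵢ`, so that
`⟪gᵢ x, x − c⟫ ≥ dᵢ (μᵢ dᵢ − Lᵢ ‖x*ⁱ − c‖)`. If `‖x − c‖ > (1 + κ) R`, the triangle inequality gives
`dᵢ > κ R`, and every summand of the field has positive inner product with `x − c`.
Hence `‖φ − c‖` is decreasing along the flow outside the ball of radius `(1 + κ) R`, and no closed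
ball around `c` of at least that radius can be left.
-/

open scoped RealInnerProductSpace BigOperators Classical

/-- The DiBS vector field: `h(x) = ∑ i, ‖x − x*ⁱ‖ · ∇ℓⁱ(x)/‖∇ℓⁱ(x)‖`,
with the `i`-th summand taken to be `0` whenever `∇ℓⁱ(x) = 0`. -/
noncomputable def dibsField {n N : ℕ} (ℓ : Fin N → EuclideanSpace ℝ (Fin n) → ℝ)
    (xstar : Fin N → EuclideanSpace ℝ (Fin n)) (x : EuclideanSpace ℝ (Fin n)) :
    EuclideanSpace ℝ (Fin n) :=
  ∑ i, if gradient (ℓ i) x ≠ 0 then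
    (‖x - xstar i‖ / ‖gradient (ℓ i) x‖) • gradient (ℓ i) x else 0

section StrongConvexity

variable {E : Type*}

theorem fderiv_apply_sub_le_of_convexOn [NormedAddCommGroup E] [NormedSpace ℝ E]
    {f : E → ℝ} {f' : E →L[ℝ] ℝ} {s : Set E} {x y : E} (hf : ConvexOn ℝ s f)
    (hx : x ∈ s) (hy : y ∈ s) (hf' : HasFDerivAt f f' x) : f' (y - x) ≤ f y - f x := by
  have hline : ConvexOn ℝ (AffineMap.lineMap x y ⁻¹' s) (f ∘ AffineMap.lineMap (k := ℝ) x y) :=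
    hf.comp_affineMap _
  have hderiv : HasDerivAt (f ∘ AffineMap.lineMap (k := ℝ) x y) (f' (y - x)) 0 :=
    HasFDerivAt.comp_hasDerivAt 0 (by simpa using hf') AffineMap.hasDerivAt_lineMap
  simpa [slope_def_field] using
    hline.le_slope_of_hasDerivAt (by simpa using hx) (by simpa using hy) one_pos hderiv

variable [NormedAddCommGroup E] [InnerProductSpace ℝ E] {f : E → ℝ} {s : Set E} {m : ℝ} {x y : E}

theorem fderiv_apply_sub_add_le_of_strongConvexOn {f' : E →L[ℝ] ℝ} (hf : StrongConvexOn s m f)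
    (hx : x ∈ s) (hy : y ∈ s) (hf' : HasFDerivAt f f' x) :
    f' (y - x) + m / 2 * ‖y - x‖ ^ 2 ≤ f y - f x := by
  have hderiv := hf'.sub ((hasStrictFDerivAt_norm_sq x).hasFDerivAt.const_mul (m / 2))
  have hgrad := fderiv_apply_sub_le_of_convexOn (strongConvexOn_iff_convex.mp hf) hx hy hderiv
  have hexpand : ‖y‖ ^ 2 = ‖x‖ ^ 2 + 2 * ⟪x, y - x⟫ + ‖y - x‖ ^ 2 := by
    rw [← norm_add_sq_real, add_sub_cancel]
  simp only [sub_apply, smul_apply, innerSL_apply_apply, nsmul_eq_mul, smul_eq_mul,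
    Nat.cast_ofNat, hexpand] at hgrad
  linarith

theorem mul_norm_sub_sq_le_fderiv_sub_of_strongConvexOn {f'x f'y : E →L[ℝ] ℝ}
    (hf : StrongConvexOn s m f) (hx : x ∈ s) (hy : y ∈ s)
    (hf'x : HasFDerivAt f f'x x) (hf'y : HasFDerivAt f f'y y) :
    m * ‖x - y‖ ^ 2 ≤ (f'x - f'y) (x - y) := by
  have hxy := fderiv_apply_sub_add_le_of_strongConvexOn hf hx hy hf'x
  have hyx := fderiv_apply_sub_add_le_of_strongConvexOn hf hy hx hf'y
  rw [← neg_sub x y, map_neg, norm_neg] at hxy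
  rw [sub_apply]
  linarith

end StrongConvexity

section Minimizer

variable {E : Type*} [NormedAddCommGroup E] [InnerProductSpace ℝ E] [CompleteSpace E]
  {f : E → ℝ} {a : E}

theorem gradient_eq_zero_of_isLocalMin (ha : IsLocalMin f a) : gradient f a = 0 := by
  rw [gradient, ha.fderiv_eq_zero, map_zero]

theorem mul_norm_sub_sq_le_inner_gradient_of_isLocalMin {s : Set E} {m : ℝ} {x : E}
    (hf : StrongConvexOn s m f) (hx : x ∈ s) (has : a ∈ s) (hfx : DifferentiableAt ℝ f x)
    (hfa : DifferentiableAt ℝ f a) (ha : IsLocalMin f a) :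
    m * ‖x - a‖ ^ 2 ≤ ⟪gradient f x, x - a⟫ := by
  simpa [ha.fderiv_eq_zero, inner_gradient_left] using
    mul_norm_sub_sq_le_fderiv_sub_of_strongConvexOn hf hx has hfx.hasFDerivAt hfa.hasFDerivAt

end Minimizer

section InvariantBall

variable {E : Type*} [NormedAddCommGroup E] [InnerProductSpace ℝ E] {c : E} {r t₀ t : ℝ}

theorem norm_sub_le_of_inner_deriv_neg {φ φ' : ℝ → E} (hφ : ContinuousOn φ (Set.Icc t₀ t))
    (hφ' : ∀ s ∈ Set.Ico t₀ t, HasDerivWithinAt φ (φ' s) (Set.Ici s) s)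
    (hinward : ∀ s ∈ Set.Ico t₀ t, r < ‖φ s - c‖ → ⟪φ s - c, φ' s⟫ < 0)
    (ht : t₀ ≤ t) (h₀ : ‖φ t₀ - c‖ ≤ r) : ‖φ t - c‖ ≤ r := by
  -- The fencing theorem needs a strict inequality on the fence, which holds on each larger sphere.
  refine le_of_forall_gt_imp_ge_of_dense fun ρ hρ ↦ ?_
  have hρ₀ : 0 ≤ ρ := (norm_nonneg _).trans (h₀.trans hρ.le)
  have hfence : ‖φ t - c‖ ^ 2 ≤ ρ ^ 2 :=
    image_le_of_deriv_right_lt_deriv_boundary (f := fun s ↦ ‖φ s - c‖ ^ 2)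
      (B := fun _ ↦ ρ ^ 2) ((hφ.sub continuousOn_const).norm.pow 2)
      (fun s hs ↦ ((hφ' s hs).sub_const c).norm_sq)
      (pow_le_pow_left₀ (norm_nonneg _) (h₀.trans hρ.le) 2) (fun s ↦ hasDerivAt_const s _)
      (fun s hs hsρ ↦ by
        have hnorm : ‖φ s - c‖ = ρ := (pow_left_inj₀ (norm_nonneg _) hρ₀ two_ne_zero).mp hsρ
        linarith [hinward s hs (hnorm ▸ hρ)])
      (Set.right_mem_Icc.mpr ht)
  exact (pow_le_pow_iff_left₀ (norm_nonneg _) hρ₀ two_ne_zero).mp hfence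

theorem norm_sub_le_of_isIntegralCurveOn_neg {v : E → E} {φ : ℝ → E}
    (hv : ∀ x, r < ‖x - c‖ → 0 < ⟪v x, x - c⟫)
    (hφ : IsIntegralCurveOn φ (fun _ x ↦ -v x) (Set.Icc t₀ t))
    (ht : t₀ ≤ t) (h₀ : ‖φ t₀ - c‖ ≤ r) : ‖φ t - c‖ ≤ r := by
  refine norm_sub_le_of_inner_deriv_neg hφ.continuousOn (φ' := fun s ↦ -v (φ s))
    (fun s hs ↦ ?_) (fun s _ hs ↦ ?_) ht h₀
  · exact (hφ s (Set.Ico_subset_Icc_self hs)).mono_of_mem_nhdsWithin (Icc_mem_nhdsGE_of_mem hs)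
  · rw [inner_neg_right, real_inner_comm, neg_lt_zero]
    exact hv _ hs

end InvariantBall

section DistanceScaledField

variable {E ι : Type*} [NormedAddCommGroup E]

/-- The DiBS field of arbitrary vector fields `g i` with reference points `a i`: each `g i` is
rescaled at `x` to have length `‖x - a i‖`. Where `g i x = 0` the `i`-th summand is `0`,
because `0` is scaled, whatever the value of the quotient. -/
noncomputable def distanceScaledField [NormedSpace ℝ E] [Fintype ι] (g : ι → E → E) (a : ι → E)
    (x : E) : E :=
  ∑ i, (‖x - a i‖ / ‖g i x‖) • g i x

theorem dibsField_eq_distanceScaledField {n N : ℕ} (ℓ : Fin N → EuclideanSpace ℝ (Fin n) → ℝ)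
    (xstar : Fin N → EuclideanSpace ℝ (Fin n)) :
    dibsField ℓ xstar = distanceScaledField (fun i ↦ gradient (ℓ i)) xstar := by
  funext x
  refine Finset.sum_congr rfl fun i _ ↦ ?_
  split_ifs with h
  · rfl
  · simp [not_not.mp h]

theorem nonneg_of_norm_le_mul_norm_sub {F : Type*} [SeminormedAddCommGroup F] [Nontrivial E]
    {g : E → F} {a : E} {L : ℝ} (hg : ∀ x, ‖g x‖ ≤ L * ‖x - a‖) : 0 ≤ L := by
  obtain ⟨x, hx⟩ := exists_ne a
  exact nonneg_of_mul_nonneg_left ((norm_nonneg _).trans (hg x)) (norm_sub_pos_iff.mpr hx)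

theorem mul_lt_norm_sub_of_one_add_mul_lt {a c x : E} {R κ : ℝ} (ha : ‖a - c‖ ≤ R)
    (hx : (1 + κ) * R < ‖x - c‖) : κ * R < ‖x - a‖ := by
  linarith [norm_sub_le_norm_sub_add_norm_sub x a c]

variable [InnerProductSpace ℝ E]

theorem inner_sub_pos_of_mul_norm_sub_lt {v a c x : E} {μ L : ℝ} (hxa : x ≠ a)
    (hsecant : μ * ‖x - a‖ ^ 2 ≤ ⟪v, x - a⟫) (hgrowth : ‖v‖ ≤ L * ‖x - a‖)
    (hlt : L * ‖a - c‖ < μ * ‖x - a‖) : 0 < ⟪v, x - c⟫ := by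
  calc 0 < (μ * ‖x - a‖ - L * ‖a - c‖) * ‖x - a‖ :=
        mul_pos (sub_pos.mpr hlt) (norm_sub_pos_iff.mpr hxa)
    _ = μ * ‖x - a‖ ^ 2 - L * ‖x - a‖ * ‖a - c‖ := by ring
    _ ≤ ⟪v, x - a⟫ - ‖v‖ * ‖a - c‖ := by gcongr
    _ ≤ ⟪v, x - a⟫ + ⟪v, a - c⟫ := by
        linarith [neg_le_of_abs_le (abs_real_inner_le_norm v (a - c))]
    _ = ⟪v, x - c⟫ := by rw [← inner_add_right, sub_add_sub_cancel]

variable [Fintype ι] [Nonempty ι] {g : ι → E → E} {a : ι → E} {μ L : ι → ℝ} {c : E} {R κ : ℝ}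

theorem inner_distanceScaledField_pos {x : E} (hxa : ∀ i, x ≠ a i)
    (hg : ∀ i, 0 < ⟪g i x, x - c⟫) : 0 < ⟪distanceScaledField g a x, x - c⟫ := by
  rw [distanceScaledField, sum_inner]
  refine Finset.sum_pos (fun i _ ↦ ?_) Finset.univ_nonempty
  have hgx : g i x ≠ 0 := fun h ↦ by simpa [h] using hg i
  rw [real_inner_smul_left]
  exact mul_pos (div_pos (norm_sub_pos_iff.mpr (hxa i)) (norm_pos_iff.mpr hgx)) (hg i)

theorem inner_distanceScaledField_pos_of_one_add_mul_lt {x : E} (hμ : ∀ i, 0 < μ i)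
    (hL : ∀ i, 0 ≤ L i) (hsecant : ∀ i, μ i * ‖x - a i‖ ^ 2 ≤ ⟪g i x, x - a i⟫)
    (hgrowth : ∀ i, ‖g i x‖ ≤ L i * ‖x - a i‖) (hR : ∀ i, ‖a i - c‖ ≤ R)
    (hκ : ∀ i, L i / μ i ≤ κ) (hx : (1 + κ) * R < ‖x - c‖) :
    0 < ⟪distanceScaledField g a x, x - c⟫ := by
  have hfar (i : ι) : κ * R < ‖x - a i‖ := mul_lt_norm_sub_of_one_add_mul_lt (hR i) hx
  have hne (i : ι) : x ≠ a i := by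
    have hκ₀ : 0 ≤ κ := (div_nonneg (hL i) (hμ i).le).trans (hκ i)
    have hR₀ : 0 ≤ R := (norm_nonneg _).trans (hR i)
    exact norm_sub_pos_iff.mp ((mul_nonneg hκ₀ hR₀).trans_lt (hfar i))
  refine inner_distanceScaledField_pos hne fun i ↦
    inner_sub_pos_of_mul_norm_sub_lt (hne i) (hsecant i) (hgrowth i) ?_
  calc L i * ‖a i - c‖ ≤ (κ * μ i) * R :=
        mul_le_mul ((div_le_iff₀ (hμ i)).mp (hκ i)) (hR i) (norm_nonneg _)
          ((hL i).trans ((div_le_iff₀ (hμ i)).mp (hκ i)))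
    _ = μ i * (κ * R) := by ring
    _ < μ i * ‖x - a i‖ := mul_lt_mul_of_pos_left (hfar i) (hμ i)

theorem dibs_field_points_outward_far_from_minimizers_general (hμ : ∀ i, 0 < μ i)
    (hsecant : ∀ i x, μ i * ‖x - a i‖ ^ 2 ≤ ⟪g i x, x - a i⟫)
    (hgrowth : ∀ i x, ‖g i x‖ ≤ L i * ‖x - a i‖) (hR : ∀ i, ‖a i - c‖ ≤ R)
    (hκ : ∀ i, L i / μ i ≤ κ) :
    (∀ x, (1 + κ) * R < ‖x - c‖ → x ≠ c → 0 < ⟪distanceScaledField g a x, x - c⟫) ∧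
    (∀ r, (1 + κ) * R ≤ r → ∀ (φ : ℝ → E) (t₀ t : ℝ),
      IsIntegralCurveOn φ (fun _ x ↦ -distanceScaledField g a x) (Set.Icc t₀ t) →
      t₀ ≤ t → ‖φ t₀ - c‖ ≤ r → ‖φ t - c‖ ≤ r) := by
  have houtward (x : E) (hx : (1 + κ) * R < ‖x - c‖) (hxc : x ≠ c) :
      0 < ⟪distanceScaledField g a x, x - c⟫ := by
    have : Nontrivial E := ⟨x, c, hxc⟩
    exact inner_distanceScaledField_pos_of_one_add_mul_lt hμ
      (fun i ↦ nonneg_of_norm_le_mul_norm_sub (hgrowth i)) (fun i ↦ hsecant i x)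
      (fun i ↦ hgrowth i x) hR hκ hx
  refine ⟨houtward, fun r hr φ t₀ t hφ ht h₀ ↦
    norm_sub_le_of_isIntegralCurveOn_neg (fun x hx ↦ houtward x (hr.trans_lt hx) ?_) hφ ht h₀⟩
  exact norm_sub_pos_iff.mp (((norm_nonneg _).trans h₀).trans_lt hx)

end DistanceScaledField

theorem dibs_field_points_outward_far_from_minimizers {n N : ℕ} (hN : 0 < N)
    (ℓ : Fin N → EuclideanSpace ℝ (Fin n) → ℝ) (μ L : Fin N → ℝ)
    (hμ : ∀ i, 0 < μ i)
    (hdiff : ∀ i, Differentiable ℝ (ℓ i))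
    (hsc : ∀ i, ConvexOn ℝ Set.univ (fun x => ℓ i x - μ i / 2 * ‖x‖ ^ 2))
    (hsmooth : ∀ i, ∀ x y, ‖gradient (ℓ i) x - gradient (ℓ i) y‖ ≤ L i * ‖x - y‖)
    (xstar : Fin N → EuclideanSpace ℝ (Fin n))
    (hmin : ∀ i, ∀ y, ℓ i (xstar i) ≤ ℓ i y)
    (c : EuclideanSpace ℝ (Fin n)) (R κ : ℝ)
    (hR : R = ⨆ i, ‖xstar i - c‖)
    (hκ : κ = ⨆ i, L i / μ i) :
    (∀ x : EuclideanSpace ℝ (Fin n), (1 + κ) * R < ‖x - c‖ → x ≠ c →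
      0 < ⟪dibsField ℓ xstar x, x - c⟫) ∧
    (∀ ε : ℝ, 0 < ε → ∀ φ : ℝ → EuclideanSpace ℝ (Fin n),
      (∀ t : ℝ, HasDerivAt φ (-(dibsField ℓ xstar (φ t))) t) →
      ∀ t₀ t : ℝ, t₀ ≤ t → ‖φ t₀ - c‖ ≤ (1 + κ) * R + ε →
        ‖φ t - c‖ ≤ (1 + κ) * R + ε) := by
  have : Nonempty (Fin N) := Fin.pos_iff_nonempty.mp hN
  have hlocmin (i : Fin N) : IsLocalMin (ℓ i) (xstar i) := .of_forall (hmin i)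
  rw [dibsField_eq_distanceScaledField]
  obtain ⟨houtward, hinvariant⟩ := dibs_field_points_outward_far_from_minimizers_general
    (g := fun i ↦ gradient (ℓ i)) (a := xstar) (c := c) (R := R) (κ := κ) hμ
    (fun i x ↦ mul_norm_sub_sq_le_inner_gradient_of_isLocalMin
      (strongConvexOn_iff_convex.mpr (hsc i)) (Set.mem_univ x) (Set.mem_univ _) (hdiff i x)
      (hdiff i _) (hlocmin i))
    (fun i x ↦ by simpa [gradient_eq_zero_of_isLocalMin (hlocmin i)] using hsmooth i x (xstar i))
    (fun i ↦ hR ▸ Finite.le_ciSup (‖xstar · - c‖) i) (fun i ↦ hκ ▸ Finite.le_ciSup _ i)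
  exact ⟨houtward, fun ε hε φ hφ t₀ t ↦
    hinvariant _ (by linarith) φ t₀ t fun s _ ↦ (hφ s).hasDerivWithinAt⟩
end

section
/- (Existence of a DiBS fixed point) Let ℓ^1,…,ℓ^N : ℝ^n → ℝ be differentiable, with ℓ^i μᵢ-strongly convex (μᵢ > 0) and Lᵢ-smooth, and let x*ⁱ be the global minimizer of ℓ^i. Then there exists x† ∈ ℝ^n with h(x†) = 0, where h is the DiBS vector field; equivalently, for every step size α > 0 the DiBS update map x ↦ x − α·h(x) has a fixed point, which is moreover Pareto stationary for ℓ^1,…,ℓ^N. -/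
open scoped RealInnerProductSpace BigOperators Classical

/-- `x` is Pareto stationary for the costs `ℓ¹, …, ℓᴺ`. -/
def ParetoStationary {n N : ℕ} (ℓ : Fin N → EuclideanSpace ℝ (Fin n) → ℝ)
    (x : EuclideanSpace ℝ (Fin n)) : Prop :=
  ∃ β : Fin N → ℝ, (∀ i, 0 ≤ β i) ∧ (∑ i, β i) = 1 ∧ (∑ i, β i • gradient (ℓ i) x) = 0

/-!
If `ℓⁱ` is convex, the gradient inequality gives `⟪∇ℓⁱ(x), x⟫ ≥ ℓⁱ(x) - ℓⁱ(0)`, and coercivity makes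
the right-hand side nonnegative on every large sphere. Each `dᵢ`, being a nonnegative multiple of
`∇ℓⁱ`, then satisfies `⟪dᵢ(x), x⟫ ≥ 0` there, so the continuous field `h` does not point inwards on
a large sphere and has a zero by Brouwer's theorem. At a zero, the positive factors multiplying the
gradients, once normalised, are the Pareto weights.

Brouwer's theorem reduces to the absence of `C¹` retractions `f` of the unit ball onto the sphere,
which follows from a volume computation due to Milnor and Rogers. For small `t` the map
`x ↦ x + t • (f x - x)` is a bijection of the ball, so the integral of its Jacobian determinant is
the volume of the ball. This integral is a polynomial in `t`, hence equals the volume for `t = 1`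
too; but `f` has values in the sphere, so its Jacobian determinant vanishes identically.
-/

open Metric MeasureTheory Set
open scoped NNReal Topology

section Extrapolation

theorem exists_weights_eval_eq_sum {K : Type*} [Field K] {T : Set K} (hT : T.Infinite) (n : ℕ)
    (a : K) : ∃ (s : Finset K) (w : K → K), ↑s ⊆ T ∧
      ∀ p : Polynomial K, p.natDegree ≤ n → p.eval a = ∑ t ∈ s, w t * p.eval t := by
  obtain ⟨s, hsT, hs⟩ := hT.exists_subset_card_eq (n + 1)
  refine ⟨s, fun t => (Lagrange.basis s id t).eval a, hsT, fun p hp => ?_⟩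
  have hdeg : p.degree < s.card := by
    rw [hs]
    exact Polynomial.degree_le_natDegree.trans_lt (by exact_mod_cast Nat.lt_succ_of_le hp)
  conv_lhs => rw [Lagrange.eq_interpolate (injOn_id _) hdeg, Lagrange.interpolate_apply]
  simp only [Polynomial.eval_finsetSum, Polynomial.eval_mul, Polynomial.eval_C, id, mul_comm]

theorem exists_polynomial_eval_eq_det_one_add_smul {R M : Type*} [CommRing R] [AddCommGroup M]
    [Module R M] [Module.Free R M] [Module.Finite R M] (f : M →ₗ[R] M) :
    ∃ p : Polynomial R, p.natDegree ≤ Module.finrank R M ∧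
      ∀ t, p.eval t = LinearMap.det (1 + t • f) := by
  nontriviality R
  let b := Module.Free.chooseBasis R M
  let A := LinearMap.toMatrix b b f
  refine ⟨((Polynomial.X : Polynomial R) • A.map Polynomial.C
    + (1 : Matrix _ _ R).map Polynomial.C).det, ?_, fun t => ?_⟩
  · rw [Module.finrank_eq_card_chooseBasisIndex]
    exact Polynomial.natDegree_det_X_add_C_le A 1
  · rw [← LinearMap.det_toMatrix b, map_add, map_smul, LinearMap.toMatrix_one,
      ← Polynomial.coe_evalRingHom, RingHom.map_det]
    congr 1
    ext i j
    simp [A, Matrix.one_apply, apply_ite, add_comm, mul_comm t]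

end Extrapolation

section FiniteDimensional

variable {E : Type*} [NormedAddCommGroup E] [NormedSpace ℝ E] [FiniteDimensional ℝ E]

theorem det_one_add_ne_zero_of_norm_lt_one {A : E →L[ℝ] E} (hA : ‖A‖ < 1) : (1 + A).det ≠ 0 := by
  have hunit : IsUnit (1 - -A) := isUnit_one_sub_of_norm_lt_one (by rwa [norm_neg])
  rw [sub_neg_eq_add] at hunit
  exact (LinearMap.isUnit_det _ (hunit.map ContinuousLinearMap.toLinearMapRingHom)).ne_zero

theorem det_one_add_pos_of_norm_lt_one {A : E →L[ℝ] E} (hA : ‖A‖ < 1) : 0 < (1 + A).det := by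
  have hcont : Continuous fun t : ℝ => (1 + t • A).det :=
    ContinuousLinearMap.continuous_det.comp (by fun_prop)
  have hne : ∀ t ∈ Icc (0 : ℝ) 1, (1 + t • A).det ≠ 0 := fun t ht =>
    det_one_add_ne_zero_of_norm_lt_one <| by
      rw [norm_smul, Real.norm_of_nonneg ht.1]
      exact (mul_le_of_le_one_left (norm_nonneg A) ht.2).trans_lt hA
  by_contra! hneg
  obtain ⟨t, ht, hdet⟩ := intermediate_value_Icc' zero_le_one hcont.continuousOn
    (show (0 : ℝ) ∈ Icc _ _ by simpa [ContinuousLinearMap.det] using hneg)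
  exact hne t ht hdet

end FiniteDimensional

theorem inter_frontier_nonempty_of_isPreconnected {X : Type*} [TopologicalSpace X] {p s : Set X}
    (hp : IsPreconnected p) (hin : (p ∩ s).Nonempty) (hout : (p \ s).Nonempty) :
    (p ∩ frontier s).Nonempty := by
  have : PreconnectedSpace p := Subtype.preconnectedSpace hp
  obtain ⟨x, hxp, hxs⟩ := hin
  obtain ⟨y, hyp, hys⟩ := hout
  obtain ⟨z, hz⟩ := nonempty_frontier_iff (s := ((↑) : p → X) ⁻¹' s) |>.2
    ⟨⟨⟨x, hxp⟩, hxs⟩, fun h => hys (h.symm ▸ mem_univ (⟨y, hyp⟩ : p) :)⟩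
  exact ⟨z, z.2, continuous_subtype_val.frontier_preimage_subset s hz⟩

theorem bijective_id_add_of_lipschitzWith {E : Type*} [NormedAddCommGroup E] [CompleteSpace E]
    {φ : E → E} {K : ℝ≥0} (hφ : LipschitzWith K φ) (hK : K < 1) :
    Function.Bijective fun x => x + φ x := by
  refine (Function.bijective_iff_existsUnique _).2 fun y => ?_
  have hcontr : ContractingWith K fun x => y - φ x :=
    ⟨hK, LipschitzWith.of_dist_le_mul fun a b => by
      simpa only [dist_sub_left] using hφ.dist_le_mul a b⟩
  refine ⟨hcontr.fixedPoint, ?_, fun x hx => hcontr.fixedPoint_unique ?_⟩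
  · exact eq_sub_iff_add_eq.1 hcontr.fixedPoint_isFixedPt.symm
  · exact (eq_sub_of_add_eq hx).symm

section Perturbation

variable {E F : Type*} [NormedAddCommGroup E] [NormedSpace ℝ E] [NormedAddCommGroup F]
  {s : Set E} {K : ℝ≥0}

theorem lipschitzWith_indicator {φ : E → F} (hs : IsClosed s) (hφ : LipschitzOnWith K φ s)
    (h0 : ∀ x ∈ frontier s, φ x = 0) : LipschitzWith K (s.indicator φ) := by
  have hcross : ∀ x ∈ s, ∀ y ∉ s, ‖φ x‖ ≤ K * dist x y := by
    intro x hx y hy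
    obtain ⟨z, hzseg, hzs⟩ := inter_frontier_nonempty_of_isPreconnected
      (convex_segment x y).isPreconnected ⟨x, left_mem_segment ℝ x y, hx⟩
      ⟨y, right_mem_segment ℝ x y, hy⟩
    calc ‖φ x‖ = dist (φ x) (φ z) := by rw [h0 z hzs, dist_zero_right]
      _ ≤ K * dist x z := hφ.dist_le_mul x hx z (hs.frontier_subset hzs)
      _ ≤ K * dist x y := by
        gcongr
        linarith [dist_add_dist_of_mem_segment hzseg, dist_nonneg (x := z) (y := y)]
  refine LipschitzWith.of_dist_le_mul fun x y => ?_
  by_cases hx : x ∈ s <;> by_cases hy : y ∈ s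
  · simpa [hx, hy] using hφ.dist_le_mul x hx y hy
  · simpa [hx, hy] using hcross x hx y hy
  · simpa [hx, hy, dist_comm] using hcross y hy x hx
  · rw [indicator_of_notMem hx, indicator_of_notMem hy, dist_self]
    positivity

theorem bijOn_id_add_of_lipschitzOnWith [CompleteSpace E] {φ : E → E} (hs : IsClosed s)
    (hφ : LipschitzOnWith K φ s) (hK : K < 1) (h0 : ∀ x ∈ frontier s, φ x = 0) :
    BijOn (fun x => x + φ x) s s := by
  obtain ⟨hinj, hsurj⟩ := bijective_id_add_of_lipschitzWith (lipschitzWith_indicator hs hφ h0) hK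
  set G : E → E := fun x => x + s.indicator φ x
  have hG_out : ∀ x ∉ s, G x = x := fun x hx => by simp [G, hx]
  have hG_in : EqOn G (fun x => x + φ x) s := fun x hx => by simp [G, hx]
  have hmaps : MapsTo G s s := fun x hx => by
    by_contra hGx
    exact hGx (by rwa [hinj (hG_out _ hGx)])
  refine BijOn.congr ⟨hmaps, hinj.injOn, fun y hy => ?_⟩ hG_in
  obtain ⟨x, rfl⟩ := hsurj y
  exact ⟨x, by_contra fun hx => hx (hG_out x hx ▸ hy), rfl⟩

end Perturbation

section Volume

variable {E : Type*} [NormedAddCommGroup E] [NormedSpace ℝ E] [FiniteDimensional ℝ E]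

theorem integral_det_one_add_smul_eq_of_infinite {X : Type*} [MeasurableSpace X] {μ : Measure X}
    {A : X → E →L[ℝ] E} {T : Set ℝ} {c : ℝ} (hT : T.Infinite)
    (hint : ∀ t ∈ T, Integrable (fun x => (1 + t • A x).det) μ)
    (hc : ∀ t ∈ T, ∫ x, (1 + t • A x).det ∂μ = c) (a : ℝ) :
    ∫ x, (1 + a • A x).det ∂μ = c := by
  obtain ⟨s, w, hsT, hw⟩ := exists_weights_eval_eq_sum hT (Module.finrank ℝ E) a
  have hsum : ∑ t ∈ s, w t = 1 := by
    simpa using (hw 1 (by simp)).symm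
  have hdet : ∀ x, (1 + a • A x).det = ∑ t ∈ s, w t * (1 + t • A x).det := fun x => by
    obtain ⟨p, hdeg, hp⟩ := exists_polynomial_eval_eq_det_one_add_smul (A x : E →ₗ[ℝ] E)
    have hp' : ∀ t, (1 + t • A x).det = p.eval t := fun t => (hp t).symm
    simp only [hp', hw p hdeg]
  calc ∫ x, (1 + a • A x).det ∂μ
      = ∑ t ∈ s, ∫ x, w t * (1 + t • A x).det ∂μ := by
        simp only [hdet]
        exact integral_finsetSum s fun t ht => (hint t (hsT ht)).const_mul (w t)
    _ = ∑ t ∈ s, w t * c := Finset.sum_congr rfl fun t ht => by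
        rw [integral_const_mul, hc t (hsT ht)]
    _ = c := by rw [← Finset.sum_mul, hsum, one_mul]

variable [MeasurableSpace E] [BorelSpace E] {μ : Measure E} [μ.IsAddHaarMeasure] {s : Set E}

theorem setIntegral_det_one_add_eq_measureReal {φ : E → E} {A : E → E →L[ℝ] E} {K : ℝ}
    (hs : IsClosed s) (hconv : Convex ℝ s) (hφ : ∀ x ∈ s, HasFDerivWithinAt φ (A x) s x)
    (hA : ∀ x ∈ s, ‖A x‖ ≤ K) (hK : K < 1) (h0 : ∀ x ∈ frontier s, φ x = 0) :
    ∫ x in s, (1 + A x).det ∂μ = μ.real s := by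
  have : CompleteSpace E := FiniteDimensional.complete ℝ E
  have hbij : BijOn (fun x => x + φ x) s s := bijOn_id_add_of_lipschitzOnWith hs
    (hconv.lipschitzOnWith_of_nnnorm_hasFDerivWithin_le hφ fun x hx =>
      NNReal.le_toNNReal_of_coe_le (hA x hx)) (Real.toNNReal_lt_one.2 hK) h0
  have hderiv : ∀ x ∈ s, HasFDerivWithinAt (fun x => x + φ x) (1 + A x) s x := fun x hx =>
    (hasFDerivWithinAt_id x s).add (hφ x hx)
  have hpos : ∀ x ∈ s, 0 < (1 + A x).det := fun x hx =>
    det_one_add_pos_of_norm_lt_one ((hA x hx).trans_lt hK)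
  calc ∫ x in s, (1 + A x).det ∂μ
      = ∫ x in s, |(1 + A x).det| • (1 : ℝ) ∂μ :=
        setIntegral_congr_fun hs.measurableSet fun x hx => by
          simp only [abs_of_pos (hpos x hx), smul_eq_mul, mul_one]
    _ = ∫ _ in (fun x => x + φ x) '' s, (1 : ℝ) ∂μ :=
        (integral_image_eq_integral_abs_det_fderiv_smul μ hs.measurableSet hderiv hbij.injOn
          fun _ => 1).symm
    _ = μ.real s := by rw [hbij.image_eq, setIntegral_const, smul_eq_mul, mul_one]

-- The left-hand side of the previous lemma for `A = t • (f' - 1)` is polynomial in `t`, so its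
-- value for small `t` persists up to `t = 1`, although `f` itself need not be injective.
theorem setIntegral_det_eq_measureReal {f : E → E} {f' : E → E →L[ℝ] E} (hs : IsCompact s)
    (hconv : Convex ℝ s) (hf : ∀ x ∈ s, HasFDerivWithinAt f (f' x) s x) (hf' : ContinuousOn f' s)
    (hid : ∀ x ∈ frontier s, f x = x) : ∫ x in s, (f' x).det ∂μ = μ.real s := by
  obtain ⟨C, hC⟩ := hs.exists_bound_of_continuousOn (hf'.sub (continuousOn_const (c := 1)))
  have hint : ∀ t : ℝ, IntegrableOn (fun x => (1 + t • (f' x - 1)).det) s μ := fun t =>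
    (ContinuousLinearMap.continuous_det.comp_continuousOn
      (continuousOn_const.add ((hf'.sub continuousOn_const).const_smul t))).integrableOn_compact hs
  have hsmall : ∀ t ∈ Ioo (0 : ℝ) (|C| + 1)⁻¹,
      ∫ x in s, (1 + t • (f' x - 1)).det ∂μ = μ.real s := fun t ht => by
    have htC : t * C < 1 :=
      calc t * C ≤ t * (|C| + 1) :=
            mul_le_mul_of_nonneg_left ((le_abs_self C).trans (lt_add_one _).le) ht.1.le
        _ < 1 := (lt_inv_mul_iff₀' (by positivity)).1 (by simpa using ht.2)
    refine setIntegral_det_one_add_eq_measureReal (φ := fun x => t • (f x - x)) hs.isClosed hconv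
      (fun x hx => ((hf x hx).sub (hasFDerivWithinAt_id x s)).const_smul t) (fun x hx => ?_) htC
      fun x hx => by rw [hid x hx, sub_self, smul_zero]
    rw [norm_smul, Real.norm_of_nonneg ht.1.le]
    exact mul_le_mul_of_nonneg_left (hC x hx) ht.1.le
  have hone := integral_det_one_add_smul_eq_of_infinite
    (Ioo_infinite (show (0 : ℝ) < (|C| + 1)⁻¹ by positivity)) (fun t _ => hint t) hsmall 1
  simpa only [one_smul, add_sub_cancel] using hone

end Volume

section Retraction

variable {E : Type*} [NormedAddCommGroup E] [InnerProductSpace ℝ E]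

theorem det_eq_zero_of_norm_eq_one [FiniteDimensional ℝ E] {f : E → E} {f' : E →L[ℝ] E}
    {s : Set E} {x : E} (hs : UniqueDiffWithinAt ℝ s x) (hx : x ∈ s)
    (hf : HasFDerivWithinAt f f' s x) (hnorm : ∀ y ∈ s, ‖f y‖ = 1) : f'.det = 0 := by
  by_contra hdet
  have hconst : HasFDerivWithinAt (fun y => ‖f y‖ ^ 2) (0 : E →L[ℝ] ℝ) s x :=
    (hasFDerivWithinAt_const (1 : ℝ) x s).congr (fun y hy => by rw [hnorm y hy, one_pow])
      (by rw [hnorm x hx, one_pow])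
  have horth : ∀ v, ⟪f x, f' v⟫ = 0 := fun v => by
    simpa using DFunLike.congr_fun (hs.eq hf.norm_sq hconst) v
  obtain ⟨v, hv⟩ := (f'.toContinuousLinearEquivOfDetNeZero hdet).surjective (f x)
  have hzero : ⟪f x, f x⟫ = 0 := by
    have := horth v
    rwa [show f' v = f x from hv] at this
  rw [real_inner_self_eq_norm_sq, hnorm x hx] at hzero
  norm_num at hzero

theorem not_contDiffOn_retraction_closedBall_sphere [FiniteDimensional ℝ E] {f : E → E}
    (hf : ContDiffOn ℝ 1 f (closedBall 0 1)) (hmaps : MapsTo f (closedBall 0 1) (sphere 0 1))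
    (hid : ∀ x ∈ sphere 0 1, f x = x) : False := by
  borelize E
  have huniq : UniqueDiffOn ℝ (closedBall (0 : E) 1) :=
    uniqueDiffOn_convex (convex_closedBall 0 1) ⟨0, ball_subset_interior_closedBall (by simp)⟩
  have hderiv : ∀ x ∈ closedBall (0 : E) 1,
      HasFDerivWithinAt f (fderivWithin ℝ f (closedBall 0 1) x) (closedBall 0 1) x :=
    fun x hx => (hf.differentiableOn one_ne_zero x hx).hasFDerivWithinAt
  have hvol := setIntegral_det_eq_measureReal (μ := Measure.addHaar) (isCompact_closedBall 0 1)
    (convex_closedBall 0 1) hderiv (hf.continuousOn_fderivWithin huniq le_rfl)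
    (by rwa [frontier_closedBall _ one_ne_zero])
  have hdet : ∀ x ∈ closedBall (0 : E) 1, (fderivWithin ℝ f (closedBall 0 1) x).det = 0 :=
    fun x hx => det_eq_zero_of_norm_eq_one (huniq x hx) hx (hderiv x hx)
      fun y hy => mem_sphere_zero_iff_norm.1 (hmaps hy)
  rw [setIntegral_congr_fun isClosed_closedBall.measurableSet hdet, integral_zero] at hvol
  exact (ENNReal.toReal_pos (measure_closedBall_pos _ _ one_pos).ne'
    measure_closedBall_lt_top.ne).ne hvol

/-- The parameter at which the ray `t ↦ x + t • u` leaves the unit ball, for `‖x‖ ≤ 1` and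
`u ≠ 0`: the larger root of the quadratic equation `‖x + t • u‖ ^ 2 = 1`. -/
noncomputable def exitTime (x u : E) : ℝ :=
  (-⟪x, u⟫ + √(⟪x, u⟫ ^ 2 + ‖u‖ ^ 2 * (1 - ‖x‖ ^ 2))) / ‖u‖ ^ 2

theorem norm_add_exitTime_smul {x u : E} (hx : ‖x‖ ≤ 1) (hu : u ≠ 0) :
    ‖x + exitTime x u • u‖ = 1 := by
  have hu' : 0 < ‖u‖ ^ 2 := by positivity
  have hdisc : 0 ≤ ⟪x, u⟫ ^ 2 + ‖u‖ ^ 2 * (1 - ‖x‖ ^ 2) := by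
    have : 0 ≤ 1 - ‖x‖ ^ 2 := sub_nonneg.2 (pow_le_one₀ (norm_nonneg x) hx)
    positivity
  have hroot : exitTime x u * ‖u‖ ^ 2 + ⟪x, u⟫ = √(⟪x, u⟫ ^ 2 + ‖u‖ ^ 2 * (1 - ‖x‖ ^ 2)) := by
    rw [exitTime, div_mul_cancel₀ _ hu'.ne']
    ring
  have hexpand : ‖x + exitTime x u • u‖ ^ 2
      = ‖x‖ ^ 2 + 2 * exitTime x u * ⟪x, u⟫ + exitTime x u ^ 2 * ‖u‖ ^ 2 := by
    rw [norm_add_sq_real, real_inner_smul_right, norm_smul, mul_pow, Real.norm_eq_abs, sq_abs]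
    ring
  have hsq : ‖u‖ ^ 2 * ‖x + exitTime x u • u‖ ^ 2 = ‖u‖ ^ 2 * 1 := by
    rw [hexpand]
    linear_combination Real.sq_sqrt hdisc + congrArg (· ^ 2) hroot
  exact (pow_eq_one_iff_of_nonneg (norm_nonneg _) two_ne_zero).1 (mul_left_cancel₀ hu'.ne' hsq)

theorem exitTime_eq_zero {x u : E} (hx : ‖x‖ = 1) (hxu : 0 ≤ ⟪x, u⟫) : exitTime x u = 0 := by
  simp [exitTime, hx, Real.sqrt_sq hxu]

theorem contDiffOn_exitTime {n : WithTop ℕ∞} :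
    ContDiffOn ℝ n (fun p : E × E => exitTime p.1 p.2)
      {p | 0 < ⟪p.1, p.2⟫ ^ 2 + ‖p.2‖ ^ 2 * (1 - ‖p.1‖ ^ 2)} := by
  have hinner : ContDiff ℝ n fun p : E × E => ⟪p.1, p.2⟫ := contDiff_fst.inner ℝ contDiff_snd
  have hdisc : ContDiff ℝ n fun p : E × E => ⟪p.1, p.2⟫ ^ 2 + ‖p.2‖ ^ 2 * (1 - ‖p.1‖ ^ 2) :=
    (hinner.pow 2).add ((contDiff_snd.norm_sq ℝ).mul (contDiff_const.sub (contDiff_fst.norm_sq ℝ)))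
  intro p hp
  have hp2 : p.2 ≠ 0 := fun h => by simp [h] at hp
  have hp2' : ‖p.2‖ ^ 2 ≠ 0 := by simpa using hp2
  exact ((hinner.neg.contDiffAt.add (hdisc.contDiffAt.sqrt (ne_of_gt hp))).div
    (contDiff_snd.norm_sq ℝ).contDiffAt hp2').contDiffWithinAt

theorem inner_sub_pos_of_norm_le_one {x y : E} (hx : ‖x‖ = 1) (hy : ‖y‖ ≤ 1) (hne : x ≠ y) :
    0 < ⟪x, x - y⟫ := by
  have hpos : 0 < ‖x - y‖ ^ 2 := by have := sub_ne_zero.2 hne; positivity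
  rw [norm_sub_sq_real, hx] at hpos
  rw [inner_sub_right, real_inner_self_eq_norm_sq, hx]
  nlinarith [norm_nonneg y]

theorem exitTime_discrim_pos {x y : E} (hx : ‖x‖ ≤ 1) (hy : ‖y‖ ≤ 1) (hne : x ≠ y) :
    0 < ⟪x, x - y⟫ ^ 2 + ‖x - y‖ ^ 2 * (1 - ‖x‖ ^ 2) := by
  have hsub : x - y ≠ 0 := sub_ne_zero.2 hne
  rcases hx.lt_or_eq with hlt | heq
  · have : 0 < 1 - ‖x‖ ^ 2 := sub_pos.2 (pow_lt_one₀ (norm_nonneg x) hlt two_ne_zero)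
    positivity
  · have := inner_sub_pos_of_norm_le_one heq hy hne
    rw [heq]
    norm_num
    positivity

end Retraction

section Brouwer

variable {E : Type*} [NormedAddCommGroup E] [InnerProductSpace ℝ E] [FiniteDimensional ℝ E]
  {f : E → E}

theorem exists_isFixedPt_closedBall_of_contDiffOn (hf : ContDiffOn ℝ 1 f (closedBall 0 1))
    (hmaps : MapsTo f (closedBall 0 1) (closedBall 0 1)) :
    ∃ x ∈ closedBall 0 1, Function.IsFixedPt f x := by
  by_contra! hno
  have hne : ∀ x ∈ closedBall 0 1, x ≠ f x := fun x hx => Ne.symm (hno x hx)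
  have hball : ∀ x ∈ closedBall (0 : E) 1, ‖x‖ ≤ 1 ∧ ‖f x‖ ≤ 1 := fun x hx =>
    ⟨mem_closedBall_zero_iff.1 hx, mem_closedBall_zero_iff.1 (hmaps hx)⟩
  have hdir : ContDiffOn ℝ 1 (fun x => x - f x) (closedBall 0 1) := contDiffOn_id.sub hf
  have htime : ContDiffOn ℝ 1 (fun x => exitTime x (x - f x)) (closedBall 0 1) :=
    contDiffOn_exitTime.comp (contDiffOn_id.prodMk hdir) fun x hx =>
      exitTime_discrim_pos (hball x hx).1 (hball x hx).2 (hne x hx)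
  refine not_contDiffOn_retraction_closedBall_sphere
    (f := fun x => x + exitTime x (x - f x) • (x - f x))
    (contDiffOn_id.add (htime.smul hdir)) (fun x hx => ?_) fun x hx => ?_
  · exact mem_sphere_zero_iff_norm.2
      (norm_add_exitTime_smul (hball x hx).1 (sub_ne_zero.2 (hne x hx)))
  · have hx' := sphere_subset_closedBall hx
    have hinner := inner_sub_pos_of_norm_le_one (mem_sphere_zero_iff_norm.1 hx)
      (hball x hx').2 (hne x hx')
    rw [exitTime_eq_zero (mem_sphere_zero_iff_norm.1 hx) hinner.le, zero_smul, add_zero]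

theorem exists_norm_sub_le_closedBall (hf : ContinuousOn f (closedBall 0 1))
    (hmaps : MapsTo f (closedBall 0 1) (closedBall 0 1)) {ε : ℝ} (hε : 0 < ε) :
    ∃ x ∈ closedBall 0 1, ‖f x - x‖ ≤ ε := by
  obtain ⟨F, hF⟩ := ContinuousMap.exists_restrict_eq isClosed_closedBall
    ⟨(closedBall 0 1).domRestrict f, hf.domRestrict⟩
  have hFf : ∀ x ∈ closedBall 0 1, F x = f x := fun x hx => DFunLike.congr_fun hF ⟨x, hx⟩
  obtain ⟨g, hg, hgF, -⟩ := F.continuous.exists_contDiff_approx 1 (ε := fun _ => ε / 2)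
    continuous_const fun _ => half_pos hε
  have hgf : ∀ x ∈ closedBall 0 1, ‖g x - f x‖ ≤ ε / 2 := fun x hx => by
    rw [← hFf x hx, ← dist_eq_norm]
    exact (hgF x).le
  have hgnorm : ∀ x ∈ closedBall (0 : E) 1, ‖g x‖ ≤ 1 + ε / 2 := fun x hx =>
    (norm_le_insert' (g x) (f x)).trans
      (add_le_add (mem_closedBall_zero_iff.1 (hmaps hx)) (hgf x hx))
  obtain ⟨x, hx, hfix⟩ := exists_isFixedPt_closedBall_of_contDiffOn
    (f := fun x => (1 + ε / 2)⁻¹ • g x) (hg.const_smul _).contDiffOn fun x hx => by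
      rw [mem_closedBall_zero_iff, norm_smul, Real.norm_of_nonneg (by positivity),
        inv_mul_le_iff₀ (by positivity), mul_one]
      exact hgnorm x hx
  have hgx : g x - x = (ε / 2) • x := by
    rw [(inv_smul_eq_iff₀ (by positivity)).1 hfix, add_smul, one_smul, add_sub_cancel_left]
  refine ⟨x, hx, ?_⟩
  calc ‖f x - x‖ = ‖(g x - x) - (g x - f x)‖ := by rw [sub_sub_sub_cancel_left]
    _ ≤ ‖g x - x‖ + ‖g x - f x‖ := norm_sub_le _ _
    _ ≤ ε / 2 + ε / 2 := by
      gcongr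
      · rw [hgx, norm_smul, Real.norm_of_nonneg (half_pos hε).le]
        exact mul_le_of_le_one_right (half_pos hε).le (mem_closedBall_zero_iff.1 hx)
      · exact hgf x hx
    _ = ε := add_halves ε

theorem exists_isFixedPt_closedBall_of_continuousOn (hf : ContinuousOn f (closedBall 0 1))
    (hmaps : MapsTo f (closedBall 0 1) (closedBall 0 1)) :
    ∃ x ∈ closedBall 0 1, Function.IsFixedPt f x := by
  obtain ⟨x, hx, hmin⟩ := (isCompact_closedBall (0 : E) 1).exists_isMinOn ⟨0, by simp⟩
    (hf.sub continuousOn_id).norm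
  refine ⟨x, hx, sub_eq_zero.1 (norm_le_zero_iff.1 (le_of_forall_pos_le_add fun ε hε => ?_))⟩
  obtain ⟨y, hy, hyε⟩ := exists_norm_sub_le_closedBall hf hmaps hε
  rw [zero_add]
  exact (hmin hy).trans hyε

-- A field without zeros would be normalised to a self-map of the ball whose fixed point `x` lies on
-- the sphere and satisfies `h (R • x) = -‖h (R • x)‖ • x`, an inward direction.
theorem exists_eq_zero_of_inner_nonneg_sphere {h : E → E} {R : ℝ} (hR : 0 < R)
    (hh : ContinuousOn h (closedBall 0 R)) (hout : ∀ x ∈ sphere 0 R, 0 ≤ ⟪h x, x⟫) :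
    ∃ x ∈ closedBall 0 R, h x = 0 := by
  by_contra! hne
  have hscale : MapsTo (fun x : E => R • x) (closedBall 0 1) (closedBall 0 R) := fun x hx => by
    rw [mem_closedBall_zero_iff, norm_smul, Real.norm_of_nonneg hR.le]
    exact mul_le_of_le_one_right hR.le (mem_closedBall_zero_iff.1 hx)
  have hcomp : ContinuousOn (fun x => h (R • x)) (closedBall 0 1) :=
    hh.comp (continuous_const_smul R).continuousOn hscale
  have hpos : ∀ x ∈ closedBall (0 : E) 1, 0 < ‖h (R • x)‖ := fun x hx =>
    norm_pos_iff.2 (hne _ (hscale hx))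
  have hunit : ∀ x ∈ closedBall (0 : E) 1, ‖-(‖h (R • x)‖⁻¹ • h (R • x))‖ = 1 := fun x hx => by
    rw [norm_neg]
    exact norm_smul_inv_norm (𝕜 := ℝ) (norm_pos_iff.1 (hpos x hx))
  obtain ⟨x, hx, hfix⟩ := exists_isFixedPt_closedBall_of_continuousOn
    (f := fun x => -(‖h (R • x)‖⁻¹ • h (R • x)))
    ((hcomp.norm.inv₀ fun x hx => (hpos x hx).ne').smul hcomp).neg
    fun x hx => mem_closedBall_zero_iff.2 (hunit x hx).le
  have hxnorm : ‖x‖ = 1 := (congrArg norm hfix).symm.trans (hunit x hx)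
  have hout' := hout (R • x) (by
    rw [mem_sphere_zero_iff_norm, norm_smul, Real.norm_of_nonneg hR.le, hxnorm, mul_one])
  have hdir : h (R • x) = ‖h (R • x)‖ • -x :=
    (inv_smul_eq_iff₀ (hpos x hx).ne').1 (neg_eq_iff_eq_neg.1 hfix)
  rw [hdir, real_inner_smul_left, inner_neg_left, real_inner_smul_right,
    real_inner_self_eq_norm_sq, hxnorm] at hout'
  nlinarith [mul_pos (hpos x hx) hR]

end Brouwer

section ConvexGradient

variable {E : Type*} [NormedAddCommGroup E] [InnerProductSpace ℝ E] [CompleteSpace E]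
  {f : E → ℝ}

theorem add_inner_le_of_convexOn_of_hasGradientAt {s : Set E} {x y g : E} (hf : ConvexOn ℝ s f)
    (hx : x ∈ s) (hy : y ∈ s) (hg : HasGradientAt f g x) : f x + ⟪g, y - x⟫ ≤ f y := by
  have hline : HasDerivAt (f ∘ AffineMap.lineMap x y) ⟪g, y - x⟫ (0 : ℝ) := by
    have hg' : HasGradientAt f g (AffineMap.lineMap x y (0 : ℝ)) := by
      rwa [AffineMap.lineMap_apply_zero]
    simpa using hg'.hasFDerivAt.comp_hasDerivAt (0 : ℝ) AffineMap.hasDerivAt_lineMap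
  have hslope := (hf.comp_affineMap (AffineMap.lineMap x y)).le_slope_of_hasDerivAt
    (x := (0 : ℝ)) (y := 1) (by simpa using hx) (by simpa using hy) one_pos hline
  rw [slope_def_field] at hslope
  simp only [Function.comp_apply, AffineMap.lineMap_apply_one, AffineMap.lineMap_apply_zero,
    sub_zero, div_one] at hslope
  linarith

theorem add_inner_gradient_le_of_convexOn (hf : ConvexOn ℝ univ f) (hdiff : Differentiable ℝ f)
    (x y : E) : f x + ⟪gradient f x, y - x⟫ ≤ f y :=
  add_inner_le_of_convexOn_of_hasGradientAt hf (mem_univ x) (mem_univ y) (hdiff x).hasGradientAt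

theorem norm_gradient_sub_gradient_le_of_convexOn (hf : ConvexOn ℝ univ f)
    (hdiff : Differentiable ℝ f) {x y : E} {ε r : ℝ} (hε : 0 ≤ ε) (hr : 0 < r)
    (hsmooth : ∀ k, ‖k‖ ≤ 2 * r → f (x + k) ≤ f x + ⟪gradient f x, k⟫ + ε * ‖k‖)
    (hy : ‖y - x‖ ≤ r) : ‖gradient f y - gradient f x‖ ≤ 2 * ε := by
  rcases eq_or_ne (gradient f y - gradient f x) 0 with hw | hw
  · rw [hw, norm_zero]
    positivity
  have hnorm : 0 < ‖gradient f y - gradient f x‖ := norm_pos_iff.2 hw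
  -- Test the gradient inequality at `y` in the direction of the gradient increment.
  set k := (r / ‖gradient f y - gradient f x‖) • (gradient f y - gradient f x) with hk
  have hknorm : ‖k‖ = r := by
    rw [hk, norm_smul, Real.norm_of_nonneg (by positivity), div_mul_cancel₀ _ hnorm.ne']
  have hstep : ‖y - x + k‖ ≤ 2 * r :=
    (norm_add_le _ _).trans (by rw [hknorm]; linarith)
  have hupper := hsmooth (y - x + k) hstep
  rw [← add_assoc, add_sub_cancel, inner_add_right] at hupper
  have hlower := add_inner_gradient_le_of_convexOn hf hdiff y (y + k)
  rw [add_sub_cancel_left] at hlower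
  have hbase := add_inner_gradient_le_of_convexOn hf hdiff x y
  have hincr : ⟪gradient f y, k⟫ - ⟪gradient f x, k⟫ = r * ‖gradient f y - gradient f x‖ := by
    rw [← inner_sub_left, hk, real_inner_smul_right, real_inner_self_eq_norm_sq]
    field_simp
  have hrem : ε * ‖y - x + k‖ ≤ ε * (2 * r) := mul_le_mul_of_nonneg_left hstep hε
  refine le_of_mul_le_mul_left ?_ hr
  linarith

theorem continuous_gradient_of_convexOn (hf : ConvexOn ℝ univ f) (hdiff : Differentiable ℝ f) :
    Continuous (gradient f) := by
  refine continuous_iff_continuousAt.2 fun x => Metric.continuousAt_iff'.2 fun ε hε => ?_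
  have hlittle := hasGradientAt_iff_isLittleO_nhds_zero.1 (hdiff x).hasGradientAt
  obtain ⟨δ, hδ, hball⟩ := Metric.eventually_nhds_iff_ball.1
    (hlittle.def (show 0 < ε / 4 by positivity))
  have hsmooth : ∀ k, ‖k‖ ≤ 2 * (δ / 4) →
      f (x + k) ≤ f x + ⟪gradient f x, k⟫ + ε / 4 * ‖k‖ := fun k hk => by
    have := (le_abs_self _).trans (hball k (by rw [mem_ball_zero_iff]; linarith))
    linarith
  filter_upwards [ball_mem_nhds x (show 0 < δ / 4 by positivity)] with y hy
  rw [dist_eq_norm]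
  have := norm_gradient_sub_gradient_le_of_convexOn hf hdiff (by positivity)
    (by positivity) hsmooth (mem_ball_iff_norm.1 hy).le
  linarith

end ConvexGradient

section Coercivity

variable {E : Type*} [NormedAddCommGroup E] [NormedSpace ℝ E] {f : E → ℝ} {a : E}

theorem add_norm_sub_mul_le_of_convexOn {m : ℝ} {x : E} (hf : ConvexOn ℝ univ f)
    (hm : ∀ z ∈ sphere a 1, m ≤ f z) (hx : 1 ≤ ‖x - a‖) : f a + ‖x - a‖ * (m - f a) ≤ f x := by
  have hpos : 0 < ‖x - a‖ := one_pos.trans_le hx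
  have hz : AffineMap.lineMap a x ‖x - a‖⁻¹ ∈ sphere a 1 := by
    rw [mem_sphere, dist_lineMap_left, dist_eq_norm', norm_inv, norm_norm, inv_mul_cancel₀ hpos.ne']
  have hconv := hf.2 (mem_univ a) (mem_univ x) (sub_nonneg.2 (inv_le_one_of_one_le₀ hx))
    (inv_nonneg.2 hpos.le) (sub_add_cancel 1 ‖x - a‖⁻¹)
  rw [← AffineMap.lineMap_apply_module, smul_eq_mul, smul_eq_mul] at hconv
  calc f a + ‖x - a‖ * (m - f a)
      ≤ f a + ‖x - a‖ * ((1 - ‖x - a‖⁻¹) * f a + ‖x - a‖⁻¹ * f x - f a) := by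
        gcongr
        exact (hm _ hz).trans hconv
    _ = f x := by field_simp; ring

theorem tendsto_cobounded_atTop_of_convexOn [FiniteDimensional ℝ E] (hf : ConvexOn ℝ univ f)
    (hmin : ∀ x, x ≠ a → f a < f x) : Filter.Tendsto f (Bornology.cobounded E) Filter.atTop := by
  have : ProperSpace E := FiniteDimensional.proper_real E
  obtain ⟨m, hm, hsphere⟩ := (isCompact_sphere a 1).exists_forall_le'
    ((hf.continuousOn isOpen_univ).mono (subset_univ _))
    fun z hz => hmin z (ne_of_mem_sphere hz one_ne_zero)
  have hdist : Filter.Tendsto (fun x => ‖x - a‖) (Bornology.cobounded E) Filter.atTop := by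
    simpa only [dist_eq_norm] using tendsto_dist_right_cobounded_atTop a
  refine Filter.tendsto_atTop_mono' _ ?_
    (Filter.tendsto_atTop_add_const_left _ (f a) (hdist.atTop_mul_const (sub_pos.2 hm)))
  filter_upwards [hdist.eventually_ge_atTop 1] with x hx
  exact add_norm_sub_mul_le_of_convexOn hf hsphere hx

end Coercivity

section DibsTerm

variable {E : Type*} [NormedAddCommGroup E] [InnerProductSpace ℝ E] [CompleteSpace E]
  {f : E → ℝ} {a x : E}

/-- The contribution `dᵢ` of a single cost `f` with minimizer `a` to the DiBS vector field. Where
the gradient of `f` vanishes the convention `r / 0 = 0` gives the value `0`. -/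
noncomputable def dibsTerm (f : E → ℝ) (a x : E) : E :=
  (‖x - a‖ / ‖gradient f x‖) • gradient f x

theorem norm_dibsTerm_le (f : E → ℝ) (a x : E) : ‖dibsTerm f a x‖ ≤ ‖x - a‖ := by
  rw [dibsTerm, norm_smul, norm_div, norm_norm, norm_norm]
  exact mul_le_of_le_div₀ (norm_nonneg _) (norm_nonneg _) le_rfl

theorem continuous_dibsTerm (hcont : Continuous (gradient f))
    (hzero : ∀ x, gradient f x = 0 → x = a) : Continuous (dibsTerm f a) := by
  refine continuous_iff_continuousAt.2 fun x => ?_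
  rcases eq_or_ne x a with rfl | hx
  · have hself : dibsTerm f x x = 0 := by
      rw [dibsTerm, sub_self, norm_zero, zero_div, zero_smul]
    rw [ContinuousAt, hself]
    exact squeeze_zero_norm (norm_dibsTerm_le f x) (tendsto_norm_sub_self x)
  · have hnorm : ‖gradient f x‖ ≠ 0 := norm_ne_zero_iff.2 fun h => hx (hzero x h)
    have hgrad := hcont.continuousAt (x := x)
    exact ((continuousAt_id.sub continuousAt_const).norm.div hgrad.norm hnorm).smul hgrad

theorem inner_dibsTerm_self_nonneg (hf : ConvexOn ℝ univ f) (hdiff : Differentiable ℝ f)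
    (hx : f 0 ≤ f x) : 0 ≤ ⟪dibsTerm f a x, x⟫ := by
  have hgrad := add_inner_gradient_le_of_convexOn hf hdiff x 0
  rw [zero_sub, inner_neg_right] at hgrad
  rw [dibsTerm, real_inner_smul_left]
  exact mul_nonneg (by positivity) (by linarith)

theorem exists_sum_dibsTerm_eq_zero [FiniteDimensional ℝ E] {ι : Type*} [Fintype ι] {f : ι → E → ℝ}
    {a : ι → E} (hf : ∀ i, ConvexOn ℝ univ (f i)) (hdiff : ∀ i, Differentiable ℝ (f i))
    (hmin : ∀ i x, x ≠ a i → f i (a i) < f i x) : ∃ x, ∑ i, dibsTerm (f i) (a i) x = 0 := by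
  have hzero : ∀ i x, gradient (f i) x = 0 → x = a i := fun i x hx => by
    by_contra hne
    have := add_inner_gradient_le_of_convexOn (hf i) (hdiff i) x (a i)
    rw [hx, inner_zero_left, add_zero] at this
    exact this.not_gt (hmin i x hne)
  have hcont : Continuous fun x => ∑ i, dibsTerm (f i) (a i) x := continuous_finsetSum _ fun i _ =>
    continuous_dibsTerm (continuous_gradient_of_convexOn (hf i) (hdiff i)) (hzero i)
  have hcoercive : ∀ᶠ x in Bornology.cobounded E, ∀ i, f i 0 ≤ f i x := Filter.eventually_all.2
    fun i => (tendsto_cobounded_atTop_of_convexOn (hf i) (hmin i)).eventually_ge_atTop _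
  obtain ⟨r, -, hr⟩ := Filter.hasBasis_cobounded_norm.eventually_iff.1 hcoercive
  obtain ⟨x, -, hx⟩ := exists_eq_zero_of_inner_nonneg_sphere (R := max r 1) (by positivity)
    hcont.continuousOn fun x hx => by
      rw [sum_inner]
      refine Finset.sum_nonneg fun i _ => inner_dibsTerm_self_nonneg (hf i) (hdiff i) (hr ?_ i)
      exact (le_max_left r 1).trans_eq (mem_sphere_zero_iff_norm.1 hx).symm
  exact ⟨x, hx⟩

end DibsTerm

section Dibs

variable {n N : ℕ} {ℓ : Fin N → EuclideanSpace ℝ (Fin n) → ℝ}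
  {xstar : Fin N → EuclideanSpace ℝ (Fin n)} {x : EuclideanSpace ℝ (Fin n)}

theorem dibsField_eq_sum_dibsTerm :
    dibsField ℓ xstar x = ∑ i, dibsTerm (ℓ i) (xstar i) x :=
  Finset.sum_congr rfl fun i _ => by
    split_ifs with h
    · rfl
    · rw [dibsTerm, not_not.1 h, smul_zero]

theorem paretoStationary_of_sum_smul_gradient_eq_zero {w : Fin N → ℝ} (hw : ∀ i, 0 ≤ w i)
    (hsum : 0 < ∑ i, w i) (hzero : ∑ i, w i • gradient (ℓ i) x = 0) : ParetoStationary ℓ x := by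
  refine ⟨fun i => w i / ∑ j, w j, fun i => div_nonneg (hw i) hsum.le, ?_, ?_⟩
  · rw [← Finset.sum_div, div_self hsum.ne']
  · simp only [div_eq_inv_mul, mul_smul, ← Finset.smul_sum, hzero, smul_zero]

theorem paretoStationary_of_dibsField_eq_zero (hN : 0 < N)
    (hgrad : ∀ i, gradient (ℓ i) (xstar i) = 0) (hx : dibsField ℓ xstar x = 0) :
    ParetoStationary ℓ x := by
  have : Nonempty (Fin N) := Fin.pos_iff_nonempty.1 hN
  -- A vanishing gradient may be given any weight; `1` keeps the total weight positive.
  let w : Fin N → ℝ := fun i =>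
    if gradient (ℓ i) x = 0 then 1 else ‖x - xstar i‖ / ‖gradient (ℓ i) x‖
  have hw : ∀ i, 0 < w i := fun i => by
    by_cases h : gradient (ℓ i) x = 0
    · simp only [w, if_pos h, one_pos]
    · have hne : x - xstar i ≠ 0 := sub_ne_zero.2 fun hxi => h (hxi ▸ hgrad i)
      simp only [w, if_neg h]
      positivity
  have hterm : ∀ i, w i • gradient (ℓ i) x = dibsTerm (ℓ i) (xstar i) x := fun i => by
    by_cases h : gradient (ℓ i) x = 0
    · rw [dibsTerm, h, smul_zero, smul_zero]
    · simp only [w, if_neg h, dibsTerm]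
  refine paretoStationary_of_sum_smul_gradient_eq_zero (fun i => (hw i).le)
    (Finset.sum_pos (fun i _ => hw i) Finset.univ_nonempty) ?_
  rw [Finset.sum_congr rfl fun i _ => hterm i, ← dibsField_eq_sum_dibsTerm, hx]

end Dibs

theorem dibs_fixed_point_exists_general {n N : ℕ} (hN : 0 < N)
    (ℓ : Fin N → EuclideanSpace ℝ (Fin n) → ℝ) (hdiff : ∀ i, Differentiable ℝ (ℓ i))
    (hconv : ∀ i, ConvexOn ℝ Set.univ (ℓ i)) (xstar : Fin N → EuclideanSpace ℝ (Fin n))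
    (hmin : ∀ i y, y ≠ xstar i → ℓ i (xstar i) < ℓ i y) :
    ∃ xdag : EuclideanSpace ℝ (Fin n),
      dibsField ℓ xstar xdag = 0 ∧
      ParetoStationary ℓ xdag ∧
      ∀ α : ℝ, 0 < α → xdag - α • dibsField ℓ xstar xdag = xdag := by
  obtain ⟨xdag, hsum⟩ := exists_sum_dibsTerm_eq_zero hconv hdiff hmin
  have hfield : dibsField ℓ xstar xdag = 0 := dibsField_eq_sum_dibsTerm.trans hsum
  have hgrad : ∀ i, gradient (ℓ i) (xstar i) = 0 := fun i => by
    have hloc : IsLocalMin (ℓ i) (xstar i) := .of_forall fun y => by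
      rcases eq_or_ne y (xstar i) with rfl | hy
      · exact le_rfl
      · exact (hmin i y hy).le
    rw [gradient, hloc.fderiv_eq_zero, map_zero]
  refine ⟨xdag, hfield, paretoStationary_of_dibsField_eq_zero hN hgrad hfield, fun α _ => ?_⟩
  rw [hfield, smul_zero, sub_zero]

theorem dibs_fixed_point_exists {n N : ℕ} (hN : 0 < N)
    (ℓ : Fin N → EuclideanSpace ℝ (Fin n) → ℝ) (μ L : Fin N → ℝ)
    (hμ : ∀ i, 0 < μ i)
    (hdiff : ∀ i, Differentiable ℝ (ℓ i))
    (hsc : ∀ i, ConvexOn ℝ Set.univ (fun x => ℓ i x - μ i / 2 * ‖x‖ ^ 2))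
    (hsmooth : ∀ i, ∀ x y, ‖gradient (ℓ i) x - gradient (ℓ i) y‖ ≤ L i * ‖x - y‖)
    (xstar : Fin N → EuclideanSpace ℝ (Fin n))
    (hmin : ∀ i, ∀ y, ℓ i (xstar i) ≤ ℓ i y) :
    ∃ xdag : EuclideanSpace ℝ (Fin n),
      dibsField ℓ xstar xdag = 0 ∧
      ParetoStationary ℓ xdag ∧
      ∀ α : ℝ, 0 < α → xdag - α • dibsField ℓ xstar xdag = xdag := by
  have hstrict : ∀ i, StrictConvexOn ℝ Set.univ (ℓ i) := fun i =>
    (strongConvexOn_iff_convex.2 (hsc i)).strictConvexOn (hμ i)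
  exact dibs_fixed_point_exists_general hN ℓ hdiff (fun i => (hstrict i).convexOn) xstar
    fun i y hy => (hmin i y).lt_of_ne fun heq => hy <| (hstrict i).eq_of_isMinOn
      (fun z _ => heq ▸ hmin i z) (fun z _ => hmin i z) (mem_univ y) (mem_univ (xstar i))
end
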